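/- Under Assumption 1, with S_n = ∑_{1≤j≤n} ξ_j for n ∈ ℕ^q, the variance matrix of the normalized partial sum converges to the asymptotic variance: Var(|n|^{−1/2} S_n) = |n|^{−1} E(S_n S_nᵀ) → σ² = ∑_{j∈ℤ^q} γ(j) in (ℝ^{p×p}, ‖·‖_∞) as n → ∞; moreover Var(|n|^{−1/2} S_n) = E(ξ_0 ξ_0ᵀ) + ∑_{−n ≤* ℓ ≤* n} E(ξ_0 ξ_ℓᵀ) + o(1) as n → ∞, where the sum is over ℓ with −n ≤ ℓ ≤ n componentwise and ℓ ≠ 0. -/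

import Mathlib

/-! By stationarity `E(S_n S_nᵀ)` is the sum of `γ(k - i)` over pairs of sites `i, k` in the box, so

  `|n|⁻¹ E(S_n S_nᵀ) = ∑_j (#Γ̃_n(j) / |n|) γ(j)`,

the sum being over all lags `j ∈ ℤ^q` (`hasSum_partialSumVar`). The weights lie in `[0, 1]` and tend
to `1` for each fixed `j`, since `#Γ̃_n(j) = ∏ i, max (n_i - |j_i|) 0` (`tendsto_card_boxJ_div`).
Once `∑_j ‖γ(j)‖ < ∞` is known, dominated convergence for series gives the limit `∑_j γ(j)`. The
expansion follows, because the sums over the boxes `-n ≤ ℓ ≤ n` are partial sums of the same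
absolutely convergent series and hence have the same limit.

Absolute summability comes from mixing. If `j` has sup norm `r > 0`, some coordinate of `j` is
`±r`, so up to exchanging the two factors `γ(j)` is a covariance of a variable of the past half-space
with one of the future half-space at distance `r`. The covariance inequality `abs_integral_mul_le`
then gives `‖γ(j)‖ ≤ C φ(r)^(1/2)` (`exists_norm_acov_le`), and since there are `O(r^(q-1))` lags of
sup norm `r`, the hypothesis `∑ r^(q-1) φ(r)^(1/2) < ∞` is exactly what is needed
(`summable_comp_supAbs`).

The covariance inequality only uses `|P(A ∩ B) - P(A) P(B)| ≤ φ(r)`. For variables bounded by `M`,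
two successive conditionings replace both variables by indicators of events and bound the covariance
by `4 M² φ(r)`. For variables with finite fourth moments, truncation at level `M` costs `O(M⁻²)`, and
`M = φ(r)^(-1/4)` balances the two terms. -/

open MeasureTheory Filter Finset Topology

noncomputable section

variable {Ω : Type*}

/-- σ-algebra generated by the field at sites whose `j`-th coordinate is `≤ r`. -/
def sigmaLE {d : ℕ} {E : Type*} [MeasurableSpace Ω] [MeasurableSpace E]
    (ξ : (Fin d → ℤ) → Ω → E) (j : Fin d) (r : ℤ) : MeasurableSpace Ω :=
  ⨆ i ∈ {i : Fin d → ℤ | i j ≤ r}, MeasurableSpace.comap (ξ i) inferInstance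

/-- σ-algebra generated by the field at sites whose `j`-th coordinate is `≥ r`. -/
def sigmaGE {d : ℕ} {E : Type*} [MeasurableSpace Ω] [MeasurableSpace E]
    (ξ : (Fin d → ℤ) → Ω → E) (j : Fin d) (r : ℤ) : MeasurableSpace Ω :=
  ⨆ i ∈ {i : Fin d → ℤ | r ≤ i j}, MeasurableSpace.comap (ξ i) inferInstance

/-- φ-mixing coefficient in direction `j` at distance `r`. -/
def phiCoeff [MeasurableSpace Ω] {d : ℕ} {E : Type*} [MeasurableSpace E]
    (ξ : (Fin d → ℤ) → Ω → E) (P : Measure Ω) (j : Fin d) (r : ℤ) : ℝ :=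
  sSup {x | ∃ A B : Set Ω, MeasurableSet[sigmaLE ξ j 0] A ∧ MeasurableSet[sigmaGE ξ j r] B ∧
    P A ≠ 0 ∧ x = |(P (A ∩ B)).toReal / (P A).toReal - (P B).toReal|}

/-- The (half-space) φ-mixing coefficient `φ(r)`, with the convention `φ(r) = 1` for `r ≤ 0`. -/
def phiMix [MeasurableSpace Ω] {d : ℕ} {E : Type*} [MeasurableSpace E]
    (ξ : (Fin d → ℤ) → Ω → E) (P : Measure Ω) (r : ℤ) : ℝ :=
  if r ≤ 0 then 1 else ⨆ j : Fin d, phiCoeff ξ P j r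

/-- Strict stationarity: all finite dimensional distributions are shift invariant. -/
def StrictStationary [MeasurableSpace Ω] {d : ℕ} {E : Type*} [MeasurableSpace E]
    (ξ : (Fin d → ℤ) → Ω → E) (P : Measure Ω) : Prop :=
  ∀ t : Fin d → ℤ,
    Measure.map (fun ω => (fun i => ξ (i + t) ω)) P = Measure.map (fun ω => (fun i => ξ i ω)) P

/-- The index box `Γ_n = {1,…,n₁} × ⋯ × {1,…,n_d}`. -/
def box (d : ℕ) (n : Fin d → ℕ) : Finset (Fin d → ℤ) :=
  Finset.Icc 1 (fun i => (n i : ℤ))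

/-- `Γ̃_n(j) = {i ∈ Γ_n : i + j ∈ Γ_n}`. -/
def boxJ (d : ℕ) (n : Fin d → ℕ) (j : Fin d → ℤ) : Finset (Fin d → ℤ) :=
  (box d n).filter (fun i => i + j ∈ box d n)

/-- The lag window `{j : |j_i| ≤ m_i ∀ i}`. -/
def lags (d : ℕ) (m : Fin d → ℕ) : Finset (Fin d → ℤ) :=
  Finset.Icc (fun i => -(m i : ℤ)) (fun i => (m i : ℤ))

/-- Autocovariance matrix `γ(j) = E(ξ_0 ξ_jᵀ)`. -/
def acov [MeasurableSpace Ω] {d p : ℕ} (ξ : (Fin d → ℤ) → Ω → (Fin p → ℝ)) (P : Measure Ω)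
    (j : Fin d → ℤ) : Fin p → Fin p → ℝ :=
  fun ν μ => ∫ ω, ξ 0 ω ν * ξ j ω μ ∂P

/-- Sample autocovariance `γ̂_n(j)`. -/
def acovHat {d p : ℕ} (ξ : (Fin d → ℤ) → Ω → (Fin p → ℝ)) (n : Fin d → ℕ) (j : Fin d → ℤ)
    (ω : Ω) : Fin p → Fin p → ℝ :=
  fun ν μ => ((boxJ d n j).card : ℝ)⁻¹ * ∑ i ∈ boxJ d n j, ξ i ω ν * ξ (i + j) ω μ

/-- The estimator `σ̂²_n = ∑_{|j| ≤ m} w_m(j) γ̂_n(j)`. -/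
def sigmaHat {d p : ℕ} (ξ : (Fin d → ℤ) → Ω → (Fin p → ℝ))
    (w : (Fin d → ℕ) → (Fin d → ℤ) → ℝ) (m n : Fin d → ℕ) (ω : Ω) : Fin p → Fin p → ℝ :=
  ∑ j ∈ lags d m, w m j • acovHat ξ n j ω


/-- The normalized variance matrix `|n|⁻¹ E(S_n S_nᵀ)` of the partial sum
`S_n = ∑_{1 ≤ j ≤ n} ξ_j` (the field being centered). -/
def partialSumVar [MeasurableSpace Ω] {d p : ℕ} (ξ : (Fin d → ℤ) → Ω → (Fin p → ℝ))
    (P : Measure Ω) (n : Fin d → ℕ) : Fin p → Fin p → ℝ :=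
  fun ν μ => (∏ i, (n i : ℝ))⁻¹ *
    ∫ ω, (∑ i ∈ box d n, ξ i ω ν) * (∑ i ∈ box d n, ξ i ω μ) ∂P

/-! ### Covariance inequalities under mixing -/

/-- One factor of a covariance can be replaced by an event of the σ-algebra it generates: the
optimal event is the one where the centered conditional expectation of the other factor is
nonnegative. -/
lemma exists_set_cov_le {m m0 : MeasurableSpace Ω} (hm : m ≤ m0) (P : Measure Ω)
    [IsProbabilityMeasure P] {X Y : Ω → ℝ} {M : ℝ} (hX : Measurable[m] X)
    (hXM : ∀ ω, |X ω| ≤ M) (hY : Integrable Y P) :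
    ∃ A, MeasurableSet[m] A ∧
      |∫ ω, X ω * Y ω ∂P - (∫ ω, X ω ∂P) * ∫ ω, Y ω ∂P| ≤
        2 * M * |∫ ω in A, Y ω ∂P - P.real A * ∫ ω, Y ω ∂P| := by
  set c := ∫ ω, Y ω ∂P with hc
  set Z : Ω → ℝ := fun ω => (P[Y|m]) ω - c with hZ
  have hZm : Measurable[m] Z := stronglyMeasurable_condExp.measurable.sub_const c
  have hZi : Integrable Z P := integrable_condExp.sub (integrable_const c)
  have hZ0 : ∫ ω, Z ω ∂P = 0 := by
    rw [hZ, integral_sub integrable_condExp (integrable_const c), integral_condExp hm]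
    simp [hc]
  have hXi : Integrable X P :=
    Integrable.of_bound (hX.mono hm le_rfl).aestronglyMeasurable M
      (ae_of_all _ fun ω => by simpa using hXM ω)
  have hXY : Integrable (X * Y) P :=
    hY.bdd_mul (hX.mono hm le_rfl).aestronglyMeasurable
      (ae_of_all _ fun ω => by simpa using hXM ω)
  have hXZ : ∫ ω, X ω * Z ω ∂P = ∫ ω, X ω * Y ω ∂P - (∫ ω, X ω ∂P) * c := by
    have h1 : ∫ ω, X ω * (P[Y|m]) ω ∂P = ∫ ω, X ω * Y ω ∂P := by
      have h := condExp_mul_of_stronglyMeasurable_left (m := m) (μ := P)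
        hX.stronglyMeasurable hXY hY
      calc ∫ ω, X ω * (P[Y|m]) ω ∂P = ∫ ω, (P[X * Y|m]) ω ∂P :=
            (integral_congr_ae h).symm
        _ = _ := integral_condExp hm
    have h2 : Integrable (fun ω => X ω * (P[Y|m]) ω) P :=
      integrable_condExp.bdd_mul (hX.mono hm le_rfl).aestronglyMeasurable
        (ae_of_all _ fun ω => by simpa using hXM ω)
    simp only [hZ, mul_sub]
    rw [integral_sub h2 (hXi.mul_const c), h1, integral_mul_const]
  have hA : MeasurableSet[m] {ω | 0 ≤ Z ω} := measurableSet_le measurable_const hZm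
  refine ⟨{ω | 0 ≤ Z ω}, hA, ?_⟩
  have hZA : ∫ ω in {ω | 0 ≤ Z ω}, Z ω ∂P =
      ∫ ω in {ω | 0 ≤ Z ω}, Y ω ∂P - P.real {ω | 0 ≤ Z ω} * c := by
    conv_lhs => rw [hZ]
    rw [integral_sub integrable_condExp.integrableOn (integrable_const c).integrableOn,
      setIntegral_condExp hm hY hA, setIntegral_const, smul_eq_mul]
  -- `∫ Z = 0`, so the positive part of `Z` carries half of its `L¹` norm
  have habs : ∫ ω, |Z ω| ∂P = 2 * ∫ ω in {ω | 0 ≤ Z ω}, Z ω ∂P := by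
    have h : ∀ ω, |Z ω| = 2 * Set.indicator {ω | 0 ≤ Z ω} Z ω - Z ω := by
      intro ω
      by_cases h0 : 0 ≤ Z ω
      · rw [Set.indicator_of_mem (by exact h0), abs_of_nonneg h0]; ring
      · rw [Set.indicator_of_notMem (by exact h0), abs_of_neg (not_le.1 h0)]; ring
    simp_rw [h]
    rw [integral_sub ((hZi.indicator (hm _ hA)).const_mul 2) hZi, hZ0, integral_const_mul,
      integral_indicator (hm _ hA), sub_zero]
  have hM : 0 ≤ M := by
    obtain ⟨ω⟩ := P.nonempty_of_neZero
    exact (abs_nonneg _).trans (hXM ω)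
  rw [← hXZ, ← hZA]
  calc |∫ ω, X ω * Z ω ∂P| ≤ ∫ ω, |X ω * Z ω| ∂P := abs_integral_le_integral_abs
    _ ≤ ∫ ω, M * |Z ω| ∂P := by
        refine integral_mono_of_nonneg (ae_of_all _ fun _ => abs_nonneg _)
          (hZi.abs.const_mul M) (ae_of_all _ fun ω => ?_)
        simp only [abs_mul]
        gcongr
        exact hXM ω
    _ = 2 * M * ∫ ω in {ω | 0 ≤ Z ω}, Z ω ∂P := by rw [integral_const_mul, habs]; ring
    _ ≤ _ := by gcongr; exact le_abs_self _

/-- Covariance inequality for bounded variables: replacing first `X`, then `Y`, by the event given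
by `exists_set_cov_le` reduces it to the mixing bound for events. -/
lemma abs_cov_le_of_bounded {m₁ m₂ m0 : MeasurableSpace Ω} (h₁ : m₁ ≤ m0) (h₂ : m₂ ≤ m0)
    (P : Measure Ω) [IsProbabilityMeasure P] {α M : ℝ}
    (hα : ∀ A B, MeasurableSet[m₁] A → MeasurableSet[m₂] B →
      |P.real (A ∩ B) - P.real A * P.real B| ≤ α)
    {X Y : Ω → ℝ} (hX : Measurable[m₁] X) (hY : Measurable[m₂] Y)
    (hXM : ∀ ω, |X ω| ≤ M) (hYM : ∀ ω, |Y ω| ≤ M) :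
    |∫ ω, X ω * Y ω ∂P - (∫ ω, X ω ∂P) * ∫ ω, Y ω ∂P| ≤ 4 * M ^ 2 * α := by
  have hM : 0 ≤ M := by
    obtain ⟨ω⟩ := P.nonempty_of_neZero
    exact (abs_nonneg _).trans (hXM ω)
  have hYi : Integrable Y P :=
    Integrable.of_bound (hY.mono h₂ le_rfl).aestronglyMeasurable M
      (ae_of_all _ fun ω => by simpa using hYM ω)
  obtain ⟨A, hA, h⟩ := exists_set_cov_le h₁ P hX hXM hYi
  obtain ⟨B, hB, h'⟩ := exists_set_cov_le h₂ P hY hYM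
    ((integrable_const (1 : ℝ)).indicator (h₁ _ hA))
  have e1 : ∫ ω, Y ω * A.indicator (fun _ => (1 : ℝ)) ω ∂P = ∫ ω in A, Y ω ∂P := by
    rw [← integral_indicator (h₁ _ hA)]
    congr 1
    ext ω
    by_cases hω : ω ∈ A <;> simp [hω]
  have e2 : ∫ ω, A.indicator (fun _ => (1 : ℝ)) ω ∂P = P.real A := by
    rw [integral_indicator (h₁ _ hA)]; simp
  have e3 : ∫ ω in B, A.indicator (fun _ => (1 : ℝ)) ω ∂P = P.real (A ∩ B) := by
    rw [setIntegral_indicator (h₁ _ hA), Set.inter_comm]; simp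
  rw [e1, e2, e3, mul_comm (∫ ω, Y ω ∂P), mul_comm (P.real B)] at h'
  calc _ ≤ _ := h
    _ ≤ 2 * M * (2 * M * α) := by
        gcongr
        refine h'.trans ?_
        gcongr
        exact hα A B hA hB
    _ = _ := by ring

/-- Truncation of a real number at level `M`: values beyond `M` are replaced by `0`. -/
def trunc (M x : ℝ) : ℝ := if |x| ≤ M then x else 0

lemma measurable_trunc (M : ℝ) : Measurable (trunc M) :=
  Measurable.ite (measurableSet_le measurable_id.abs measurable_const) measurable_id
    measurable_const

lemma abs_trunc_le {M : ℝ} (hM : 0 ≤ M) (x : ℝ) : |trunc M x| ≤ M := by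
  unfold trunc; split_ifs with h
  · exact h
  · simpa using hM

lemma abs_sub_trunc_le {M : ℝ} (hM : 0 < M) (x : ℝ) : |x - trunc M x| ≤ x ^ 4 / M ^ 3 := by
  unfold trunc; split_ifs with h
  · simp; positivity
  · rw [sub_zero, le_div_iff₀ (by positivity)]
    calc |x| * M ^ 3 ≤ |x| * |x| ^ 3 := by gcongr; exact (not_le.1 h).le
      _ = |x| ^ 4 := by ring
      _ = x ^ 4 := by rw [pow_abs, abs_of_nonneg (by positivity)]

lemma abs_mul_sub_trunc_le {M : ℝ} (hM : 0 < M) (x y : ℝ) :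
    |x * y - trunc M x * trunc M y| ≤ (x ^ 4 + y ^ 4) / M ^ 2 := by
  have key : ∀ a b : ℝ, M < |a| ∨ M < |b| → |a * b| ≤ (a ^ 4 + b ^ 4) / M ^ 2 := by
    intro a b h
    have hM2 : M ^ 2 ≤ a ^ 2 + b ^ 2 := by
      rw [← sq_abs a, ← sq_abs b]
      rcases h with h | h <;> nlinarith [sq_nonneg |a|, sq_nonneg |b|]
    rw [le_div_iff₀ (by positivity), abs_mul]
    have h2 : 2 * (|a| * |b|) ≤ a ^ 2 + b ^ 2 := by
      rw [← sq_abs a, ← sq_abs b]; nlinarith [sq_nonneg (|a| - |b|)]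
    have h3 : |a| * |b| * M ^ 2 ≤ |a| * |b| * (a ^ 2 + b ^ 2) := by gcongr
    nlinarith [sq_nonneg (a ^ 2 - b ^ 2), mul_nonneg (abs_nonneg a) (abs_nonneg b),
      sq_nonneg a, sq_nonneg b]
  unfold trunc
  split_ifs with h1 h2 h2
  · simp; positivity
  · simpa using key x y (Or.inr (not_le.1 h2))
  · simpa using key x y (Or.inl (not_le.1 h1))
  · simpa using key x y (Or.inl (not_le.1 h1))

lemma abs_le_one_add_pow_four (x : ℝ) : |x| ≤ 1 + x ^ 4 := by
  rcases abs_cases x with ⟨h, _⟩ | ⟨h, _⟩ <;> rw [h] <;>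
    nlinarith [sq_nonneg (x ^ 2 - 1), sq_nonneg (x - 1), sq_nonneg (x + 1), sq_nonneg x]

lemma abs_mul_le_pow_four (x y : ℝ) : |x * y| ≤ 1 + x ^ 4 + y ^ 4 := by
  rw [abs_mul]
  have h2 : 2 * (|x| * |y|) ≤ x ^ 2 + y ^ 2 := by
    rw [← sq_abs x, ← sq_abs y]; nlinarith [sq_nonneg (|x| - |y|)]
  nlinarith [sq_nonneg (x ^ 2 - 1), sq_nonneg (y ^ 2 - 1), sq_nonneg x, sq_nonneg y]

lemma integrable_of_pow_four {m0 : MeasurableSpace Ω} {P : Measure Ω} [IsProbabilityMeasure P]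
    {X : Ω → ℝ} (hX : Measurable X) (hX4 : Integrable (fun ω => X ω ^ 4) P) :
    Integrable X P :=
  ((integrable_const (1 : ℝ)).add hX4).mono' hX.aestronglyMeasurable
    (ae_of_all _ fun ω => by simpa using abs_le_one_add_pow_four (X ω))

lemma integrable_mul_of_pow_four {m0 : MeasurableSpace Ω} {P : Measure Ω}
    [IsProbabilityMeasure P] {X Y : Ω → ℝ} (hX : Measurable X) (hY : Measurable Y)
    (hX4 : Integrable (fun ω => X ω ^ 4) P) (hY4 : Integrable (fun ω => Y ω ^ 4) P) :
    Integrable (fun ω => X ω * Y ω) P :=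
  (((integrable_const (1 : ℝ)).add hX4).add hY4).mono' (hX.mul hY).aestronglyMeasurable
    (ae_of_all _ fun ω => by simpa using abs_mul_le_pow_four (X ω) (Y ω))

lemma abs_integral_le_of_abs_le {m0 : MeasurableSpace Ω} {P : Measure Ω} {f g : Ω → ℝ}
    (hg : Integrable g P) (h : ∀ ω, |f ω| ≤ g ω) : |∫ ω, f ω ∂P| ≤ ∫ ω, g ω ∂P :=
  (Real.norm_eq_abs _).symm.trans_le (norm_integral_le_of_norm_le hg
    (ae_of_all _ fun ω => (Real.norm_eq_abs _).trans_le (h ω)))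

/-- Davydov-type covariance inequality with fourth moments: mixing rate `α` between the two
σ-algebras gives covariances of order `√α`. Truncating at `M = α^{-1/4}` balances the bounded
part, of order `α M²`, with the tails, of order `M⁻²`. -/
lemma abs_integral_mul_le {m₁ m₂ m0 : MeasurableSpace Ω} (h₁ : m₁ ≤ m0) (h₂ : m₂ ≤ m0)
    (P : Measure Ω) [IsProbabilityMeasure P] {α K : ℝ}
    (hα : ∀ A B, MeasurableSet[m₁] A → MeasurableSet[m₂] B →
      |P.real (A ∩ B) - P.real A * P.real B| ≤ α)
    {X Y : Ω → ℝ} (hX : Measurable[m₁] X) (hY : Measurable[m₂] Y)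
    (hX4 : Integrable (fun ω => X ω ^ 4) P) (hY4 : Integrable (fun ω => Y ω ^ 4) P)
    (hXK : ∫ ω, X ω ^ 4 ∂P ≤ K) (hYK : ∫ ω, Y ω ^ 4 ∂P ≤ K) (hX0 : ∫ ω, X ω ∂P = 0) :
    |∫ ω, X ω * Y ω ∂P| ≤ (4 + 3 * K) * √α := by
  have hXm : Measurable X := hX.mono h₁ le_rfl
  have hYm : Measurable Y := hY.mono h₂ le_rfl
  have hα0 : 0 ≤ α := (abs_nonneg _).trans (hα ∅ ∅ (@MeasurableSet.empty _ m₁) (@MeasurableSet.empty _ m₂))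
  have hbd : ∀ M : ℝ, 0 < M → |∫ ω, X ω * Y ω ∂P| ≤ 4 * M ^ 2 * α + 3 * K / M ^ 2 := by
    intro M hM
    have hXt : Measurable[m₁] (fun ω => trunc M (X ω)) := (measurable_trunc M).comp hX
    have hYt : Measurable[m₂] (fun ω => trunc M (Y ω)) := (measurable_trunc M).comp hY
    have hcov := abs_cov_le_of_bounded h₁ h₂ P hα hXt hYt
      (fun ω => abs_trunc_le hM.le _) (fun ω => abs_trunc_le hM.le _)
    have hXti : Integrable (fun ω => trunc M (X ω)) P :=
      Integrable.of_bound (hXt.mono h₁ le_rfl).aestronglyMeasurable M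
        (ae_of_all _ fun ω => by simpa using abs_trunc_le hM.le _)
    have hXYti : Integrable (fun ω => trunc M (X ω) * trunc M (Y ω)) P :=
      hXti.mul_bdd (c := M) (hYt.mono h₂ le_rfl).aestronglyMeasurable
        (ae_of_all _ fun ω => by simpa using abs_trunc_le hM.le _)
    have hprod : |∫ ω, X ω * Y ω ∂P - ∫ ω, trunc M (X ω) * trunc M (Y ω) ∂P|
        ≤ 2 * K / M ^ 2 := by
      rw [← integral_sub (integrable_mul_of_pow_four hXm hYm hX4 hY4) hXYti]
      calc _ ≤ ∫ ω, (X ω ^ 4 + Y ω ^ 4) / M ^ 2 ∂P :=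
            abs_integral_le_of_abs_le ((hX4.add hY4).div_const _)
              (fun ω => abs_mul_sub_trunc_le hM _ _)
        _ = (∫ ω, X ω ^ 4 ∂P + ∫ ω, Y ω ^ 4 ∂P) / M ^ 2 := by
            rw [integral_div, integral_add hX4 hY4]
        _ ≤ _ := by gcongr; linarith
    have hEX : |∫ ω, trunc M (X ω) ∂P| ≤ K / M ^ 3 := by
      have : |∫ ω, X ω ∂P - ∫ ω, trunc M (X ω) ∂P| ≤ K / M ^ 3 := by
        rw [← integral_sub (integrable_of_pow_four hXm hX4) hXti]
        calc _ ≤ ∫ ω, X ω ^ 4 / M ^ 3 ∂P :=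
              abs_integral_le_of_abs_le (hX4.div_const _)
                (fun ω => abs_sub_trunc_le hM _)
          _ = (∫ ω, X ω ^ 4 ∂P) / M ^ 3 := integral_div _ _
          _ ≤ _ := by gcongr
      simpa [hX0] using this
    have hEY : |∫ ω, trunc M (Y ω) ∂P| ≤ M := by
      simpa using abs_integral_le_of_abs_le (integrable_const M (μ := P))
        (fun ω => abs_trunc_le hM.le (Y ω))
    have hEE : |(∫ ω, trunc M (X ω) ∂P) * ∫ ω, trunc M (Y ω) ∂P| ≤ K / M ^ 2 := by
      rw [abs_mul]
      calc _ ≤ K / M ^ 3 * M := by gcongr; exact (abs_nonneg _).trans hEX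
        _ = _ := by field_simp
    have e : 3 * K / M ^ 2 = 2 * K / M ^ 2 + K / M ^ 2 := by ring
    rw [e]
    have := abs_le.1 hcov; have := abs_le.1 hprod; have := abs_le.1 hEE
    rw [abs_le]; constructor <;> linarith
  -- `α` may vanish, so the optimal level is first taken for `t > α`, and then `t ↓ α`
  have hpos : ∀ t : ℝ, α < t → |∫ ω, X ω * Y ω ∂P| ≤ (4 + 3 * K) * √t := by
    intro t ht
    have ht0 : 0 < t := hα0.trans_lt ht
    have hs : 0 < √t := Real.sqrt_pos.2 ht0
    refine (hbd (√((√t)⁻¹)) (by positivity)).trans ?_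
    rw [Real.sq_sqrt (by positivity)]
    have h1 : (√t)⁻¹ * α ≤ √t := by
      rw [inv_mul_le_iff₀ hs, Real.mul_self_sqrt ht0.le]; exact ht.le
    have h2 : 3 * K / (√t)⁻¹ = 3 * K * √t := by field_simp
    rw [h2]; nlinarith
  have hlim : Tendsto (fun t : ℝ => (4 + 3 * K) * √t) (𝓝[>] α) (𝓝 ((4 + 3 * K) * √α)) :=
    ((Real.continuous_sqrt.tendsto α).const_mul _).mono_left nhdsWithin_le_nhds
  exact ge_of_tendsto hlim (eventually_nhdsWithin_of_forall hpos)

/-! ### The φ-mixing coefficients and the past and future σ-algebras -/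

lemma sigmaLE_le {d : ℕ} {E : Type*} [MeasurableSpace Ω] [MeasurableSpace E]
    {ξ : (Fin d → ℤ) → Ω → E} (hmeas : ∀ i, Measurable (ξ i)) (k : Fin d) (r : ℤ) :
    sigmaLE ξ k r ≤ ‹MeasurableSpace Ω› :=
  iSup₂_le fun i _ => (hmeas i).comap_le

lemma sigmaGE_le {d : ℕ} {E : Type*} [MeasurableSpace Ω] [MeasurableSpace E]
    {ξ : (Fin d → ℤ) → Ω → E} (hmeas : ∀ i, Measurable (ξ i)) (k : Fin d) (r : ℤ) :
    sigmaGE ξ k r ≤ ‹MeasurableSpace Ω› :=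
  iSup₂_le fun i _ => (hmeas i).comap_le

lemma measurable_sigmaLE {d : ℕ} {E : Type*} [MeasurableSpace Ω] [MeasurableSpace E]
    (ξ : (Fin d → ℤ) → Ω → E) {k : Fin d} {r : ℤ} {i : Fin d → ℤ} (hi : i k ≤ r) :
    Measurable[sigmaLE ξ k r] (ξ i) := by
  rw [measurable_iff_comap_le]
  exact le_iSup₂_of_le (f := fun (i : Fin d → ℤ) (_ : i ∈ {i : Fin d → ℤ | i k ≤ r}) =>
    MeasurableSpace.comap (ξ i) inferInstance) i hi le_rfl

lemma measurable_sigmaGE {d : ℕ} {E : Type*} [MeasurableSpace Ω] [MeasurableSpace E]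
    (ξ : (Fin d → ℤ) → Ω → E) {k : Fin d} {r : ℤ} {i : Fin d → ℤ} (hi : r ≤ i k) :
    Measurable[sigmaGE ξ k r] (ξ i) := by
  rw [measurable_iff_comap_le]
  exact le_iSup₂_of_le (f := fun (i : Fin d → ℤ) (_ : i ∈ {i : Fin d → ℤ | r ≤ i k}) =>
    MeasurableSpace.comap (ξ i) inferInstance) i hi le_rfl

lemma abs_measureReal_inter_sub_le_phiMix {d : ℕ} {E : Type*} [MeasurableSpace Ω]
    [MeasurableSpace E] (P : Measure Ω) [IsProbabilityMeasure P]
    (ξ : (Fin d → ℤ) → Ω → E) (k : Fin d) {r : ℤ} (hr : 0 < r) {A B : Set Ω}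
    (hA : MeasurableSet[sigmaLE ξ k 0] A) (hB : MeasurableSet[sigmaGE ξ k r] B) :
    |P.real (A ∩ B) - P.real A * P.real B| ≤ phiMix ξ P r := by
  have hle : phiCoeff ξ P k r ≤ phiMix ξ P r := by
    rw [phiMix, if_neg (not_le.2 hr)]
    exact le_ciSup (f := fun j => phiCoeff ξ P j r) (Set.finite_range _).bddAbove k
  have hbdd : BddAbove {x | ∃ A B : Set Ω, MeasurableSet[sigmaLE ξ k 0] A ∧
      MeasurableSet[sigmaGE ξ k r] B ∧
      P A ≠ 0 ∧ x = |(P (A ∩ B)).toReal / (P A).toReal - (P B).toReal|} := by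
    refine ⟨1, ?_⟩
    rintro x ⟨A, B, -, -, -, rfl⟩
    have h1 : P.real (A ∩ B) / P.real A ≤ 1 :=
      div_le_one_of_le₀ (measureReal_mono Set.inter_subset_left) measureReal_nonneg
    have h2 : 0 ≤ P.real (A ∩ B) / P.real A := by positivity
    have h3 : P.real B ≤ 1 := measureReal_le_one
    have h4 : 0 ≤ P.real B := measureReal_nonneg
    change |P.real (A ∩ B) / P.real A - P.real B| ≤ 1
    rw [abs_le]; constructor <;> linarith
  have h0 : 0 ≤ phiCoeff ξ P k r := by
    apply Real.sSup_nonneg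
    rintro x ⟨A, B, -, -, -, rfl⟩
    exact abs_nonneg _
  refine le_trans ?_ hle
  by_cases hPA : P A = 0
  · have h1 : P.real A = 0 := by simp [measureReal_def, hPA]
    have h2 : P.real (A ∩ B) = 0 :=
      le_antisymm (h1 ▸ measureReal_mono Set.inter_subset_left) measureReal_nonneg
    simpa [h1, h2] using h0
  · have hx : |P.real (A ∩ B) / P.real A - P.real B| ≤ phiCoeff ξ P k r :=
      le_csSup hbdd ⟨A, B, hA, hB, hPA, rfl⟩
    have hpos : 0 < P.real A := by
      rw [measureReal_def]; exact ENNReal.toReal_pos hPA (measure_ne_top _ _)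
    have e : P.real (A ∩ B) - P.real A * P.real B =
        P.real A * (P.real (A ∩ B) / P.real A - P.real B) := by field_simp
    rw [e, abs_mul, abs_of_pos hpos]
    calc _ ≤ 1 * |P.real (A ∩ B) / P.real A - P.real B| := by
          gcongr; exact measureReal_le_one
      _ ≤ _ := by rwa [one_mul]

/-! ### Consequences of strict stationarity -/

section Stationary

variable {d p : ℕ} [MeasurableSpace Ω] {P : Measure Ω} {ξ : (Fin d → ℤ) → Ω → (Fin p → ℝ)}

lemma StrictStationary.identDistrib (hstat : StrictStationary ξ P)
    (hmeas : ∀ i, Measurable (ξ i)) (t : Fin d → ℤ) :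
    ProbabilityTheory.IdentDistrib (fun ω => (fun i => ξ (i + t) ω)) (fun ω => (fun i => ξ i ω))
      P P where
  aemeasurable_fst := (measurable_pi_lambda _ fun i => hmeas (i + t)).aemeasurable
  aemeasurable_snd := (measurable_pi_lambda _ fun i => hmeas i).aemeasurable
  map_eq := hstat t

lemma StrictStationary.identDistrib_pow_four (hstat : StrictStationary ξ P)
    (hmeas : ∀ i, Measurable (ξ i)) (t : Fin d → ℤ) (ν : Fin p) :
    ProbabilityTheory.IdentDistrib (fun ω => ξ t ω ν ^ 4) (fun ω => ξ 0 ω ν ^ 4) P P := by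
  have h := (hstat.identDistrib hmeas t).comp
    (u := fun f : (Fin d → ℤ) → (Fin p → ℝ) => f 0 ν ^ 4) (by fun_prop)
  simpa [Function.comp_def] using h

lemma StrictStationary.integral_mul (hstat : StrictStationary ξ P)
    (hmeas : ∀ i, Measurable (ξ i)) (i k : Fin d → ℤ) (ν μ : Fin p) :
    ∫ ω, ξ i ω ν * ξ k ω μ ∂P = acov ξ P (k - i) ν μ := by
  have h := ((hstat.identDistrib hmeas i).comp
    (u := fun f : (Fin d → ℤ) → (Fin p → ℝ) => f 0 ν * f (k - i) μ) (by fun_prop)).integral_eq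
  simpa [Function.comp_def, acov] using h

end Stationary

/-! ### Decay and summability of the autocovariances -/

/-- The sup norm `max_k |j_k|` of a lag, as a natural number. -/
def supAbs {d : ℕ} (j : Fin d → ℤ) : ℕ := Finset.univ.sup fun k => (j k).natAbs

/-- The mixing bound on the autocovariances. A lag of sup norm `r` has a coordinate equal to `r`
or to `-r`; the second case reduces to the first by stationarity, exchanging the two factors. -/
lemma exists_norm_acov_le {q p : ℕ} [Nonempty (Fin q)] [MeasurableSpace Ω] (P : Measure Ω)
    [IsProbabilityMeasure P] (ξ : (Fin q → ℤ) → Ω → (Fin p → ℝ))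
    (hmeas : ∀ i, Measurable (ξ i)) (hstat : StrictStationary ξ P)
    (hmean : ∀ k, ∫ ω, ξ 0 ω k ∂P = 0)
    (hmom : ∀ k, Integrable (fun ω => (ξ 0 ω k) ^ 4) P) :
    ∃ C : ℝ, ∀ j, ‖acov ξ P j‖ ≤ C * √(phiMix ξ P (supAbs j : ℤ)) := by
  set K : ℝ := ∑ k, ∫ ω, (ξ 0 ω k) ^ 4 ∂P with hK
  have hpos : ∀ k, 0 ≤ ∫ ω, (ξ 0 ω k) ^ 4 ∂P := fun k => integral_nonneg fun ω => by positivity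
  have hK0 : 0 ≤ K := Finset.sum_nonneg fun k _ => hpos k
  have hint : ∀ i k, Integrable (fun ω => (ξ i ω k) ^ 4) P := fun i k =>
    (hstat.identDistrib_pow_four hmeas i k).integrable_iff.2 (hmom k)
  have hle : ∀ i k, ∫ ω, (ξ i ω k) ^ 4 ∂P ≤ K := fun i k => by
    rw [(hstat.identDistrib_pow_four hmeas i k).integral_eq]
    exact Finset.single_le_sum (f := fun k => ∫ ω, (ξ 0 ω k) ^ 4 ∂P) (fun k _ => hpos k)
      (Finset.mem_univ k)
  have hkey : ∀ (k : Fin q) (r : ℤ) (hr : 0 < r) (j : Fin q → ℤ) (hj : r ≤ j k) (ν μ : Fin p),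
      |∫ ω, ξ 0 ω ν * ξ j ω μ ∂P| ≤ (4 + 3 * K) * √(phiMix ξ P r) := by
    intro k r hr j hj ν μ
    exact abs_integral_mul_le (sigmaLE_le hmeas k 0) (sigmaGE_le hmeas k r) P
      (fun A B hA hB => abs_measureReal_inter_sub_le_phiMix P ξ k hr hA hB)
      ((measurable_pi_apply ν).comp (measurable_sigmaLE ξ (by simp)))
      ((measurable_pi_apply μ).comp (measurable_sigmaGE ξ hj))
      (hint 0 ν) (hint j μ) (hle 0 ν) (hle j μ) (hmean ν)
  refine ⟨4 + 3 * K, fun j => ?_⟩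
  have hC : 0 ≤ (4 + 3 * K) * √(phiMix ξ P (supAbs j : ℤ)) := by positivity
  rw [pi_norm_le_iff_of_nonneg hC]
  intro ν
  rw [pi_norm_le_iff_of_nonneg hC]
  intro μ
  rw [Real.norm_eq_abs]
  obtain ⟨k, -, hk⟩ := Finset.exists_mem_eq_sup Finset.univ Finset.univ_nonempty
    fun k => (j k).natAbs
  change supAbs j = (j k).natAbs at hk
  rcases Nat.eq_zero_or_pos (supAbs j) with h0 | h0
  · -- at lag zero `phiMix = 1`, which bounds every `|P(A ∩ B) - P(A) P(B)|`
    have h1 : phiMix ξ P (supAbs j : ℤ) = 1 := by simp [phiMix, h0]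
    rw [h1]
    refine abs_integral_mul_le le_rfl le_rfl P (fun A B _ _ => ?_)
      ((measurable_pi_apply ν).comp (hmeas 0)) ((measurable_pi_apply μ).comp (hmeas j))
      (hint 0 ν) (hint j μ) (hle 0 ν) (hle j μ) (hmean ν)
    have h2 : P.real (A ∩ B) ≤ 1 := measureReal_le_one
    have h3 : P.real A * P.real B ≤ 1 :=
      mul_le_one₀ measureReal_le_one measureReal_nonneg measureReal_le_one
    have h4 : 0 ≤ P.real A * P.real B := by positivity
    have h5 : 0 ≤ P.real (A ∩ B) := measureReal_nonneg
    rw [abs_le]; constructor <;> linarith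
  · rcases le_total 0 (j k) with hj | hj
    · exact hkey k _ (by exact_mod_cast h0) j (by omega) ν μ
    · have e : acov ξ P j ν μ = ∫ ω, ξ 0 ω μ * ξ (-j) ω ν ∂P := by
        have := hstat.integral_mul hmeas (-j) 0 ν μ
        rw [zero_sub, neg_neg] at this
        rw [← this]
        simp_rw [mul_comm]
      rw [e]
      exact hkey k _ (by exact_mod_cast h0) (-j) (by simp only [Pi.neg_apply]; omega) μ ν

lemma mem_Icc_iff_supAbs_le {q : ℕ} {j : Fin q → ℤ} {r : ℕ} :
    j ∈ Finset.Icc (fun _ => -(r : ℤ)) (fun _ => (r : ℤ)) ↔ supAbs j ≤ r := by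
  simp only [Finset.mem_Icc, Pi.le_def, supAbs, Finset.sup_le_iff, Finset.mem_univ, true_implies,
    ← forall_and]
  exact forall_congr' fun k => by omega

/-- Spheres of radius `r` for the sup norm in `ℤ^q` have `O(r^(q-1))` points. -/
lemma card_supAbs_eq_le {q : ℕ} (u : Finset (Fin q → ℤ)) (r : ℕ) :
    #{j ∈ u | supAbs j = r + 1} ≤ 2 * q * 3 ^ (q - 1) * (r + 1) ^ (q - 1) := by
  let s (n : ℕ) : Finset (Fin q → ℤ) := Finset.Icc (fun _ => -(n : ℤ)) (fun _ => (n : ℤ))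
  have hs : s r ⊆ s (r + 1) := fun j hj =>
    mem_Icc_iff_supAbs_le.2 ((mem_Icc_iff_supAbs_le.1 hj).trans r.le_succ)
  have hcard : #(s (r + 1) \ s r) ≤ 2 * q * (2 * r + 3) ^ (q - 1) := by
    simp only [hs, card_sdiff_of_subset, s, Pi.card_Icc, Int.card_Icc, prod_const,
      Finset.card_univ, Fintype.card_fin]
    grind [abs_pow_sub_pow_le (α := ℤ) (2 * r + 3) (2 * r + 1) q]
  calc _ ≤ #(s (r + 1) \ s r) := by
        refine Finset.card_le_card fun j hj => ?_
        have := (Finset.mem_filter.1 hj).2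
        rw [Finset.mem_sdiff, mem_Icc_iff_supAbs_le, mem_Icc_iff_supAbs_le]
        omega
    _ ≤ _ := hcard
    _ ≤ 2 * q * (3 * (r + 1)) ^ (q - 1) := by gcongr; omega
    _ = _ := by rw [mul_pow]; ring

/-- Radial summation over `ℤ^q`: spheres of radius `r` have `O(r^(q-1))` points, so the weighted
series over radii controls the series over lags. -/
lemma summable_comp_supAbs {q : ℕ} {a : ℕ → ℝ} (ha : ∀ r, 0 ≤ a r)
    (h : Summable fun r : ℕ => (r : ℝ) ^ (q - 1) * a r) :
    Summable fun j : Fin q → ℤ => a (supAbs j) := by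
  set D : ℝ := 2 * q * 3 ^ (q - 1) with hD
  set b : ℕ → ℝ := fun r => (if r = 0 then a 0 else 0) + D * ((r : ℝ) ^ (q - 1) * a r) with hb
  have hb0 : ∀ r, 0 ≤ b r := fun r => by
    have := ha r; have := ha 0
    simp only [hb, hD]; split_ifs <;> positivity
  have hbs : Summable b :=
    (summable_of_ne_finset_zero (s := {0}) fun r hr => if_neg (by simpa using hr)).add
      (h.mul_left D)
  have hcnt : ∀ (u : Finset (Fin q → ℤ)) (r : ℕ),
      ∑ j ∈ u with supAbs j = r, a (supAbs j) ≤ b r := by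
    intro u r
    have e : ∑ j ∈ u with supAbs j = r, a (supAbs j) = (#{j ∈ u | supAbs j = r} : ℝ) * a r := by
      rw [Finset.sum_congr rfl fun j hj => by rw [(Finset.mem_filter.1 hj).2], Finset.sum_const,
        nsmul_eq_mul]
    rw [e]
    have har := ha r
    cases r with
    | zero =>
      have h1 : #{j ∈ u | supAbs j = 0} ≤ 1 := by
        refine Finset.card_le_one.2 fun x hx y hy => ?_
        have hz : ∀ z : Fin q → ℤ, supAbs z = 0 → z = 0 := fun z hz => by
          have := mem_Icc_iff_supAbs_le.2 hz.le
          simp only [Finset.mem_Icc, Pi.le_def] at this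
          funext k
          have h1 := this.1 k; have h2 := this.2 k
          simp at h1 h2 ⊢; omega
        rw [hz x (Finset.mem_filter.1 hx).2, hz y (Finset.mem_filter.1 hy).2]
      have h2 : (#{j ∈ u | supAbs j = 0} : ℝ) ≤ 1 := by exact_mod_cast h1
      have h3 : 0 ≤ D * (((0 : ℕ) : ℝ) ^ (q - 1) * a 0) := by rw [hD]; positivity
      simp only [hb, if_true]
      nlinarith
    | succ r =>
      have h1 : (#{j ∈ u | supAbs j = r + 1} : ℝ) ≤ D * ((r + 1 : ℕ) : ℝ) ^ (q - 1) := by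
        rw [hD]; exact_mod_cast card_supAbs_eq_le u r
      simp only [hb, Nat.succ_ne_zero, if_false, zero_add, ← mul_assoc]
      gcongr
  refine summable_of_sum_le (c := ∑' r, b r) (fun j => ha _) fun u => ?_
  rw [← Finset.sum_fiberwise_of_maps_to (t := u.image supAbs)
    (fun j hj => Finset.mem_image_of_mem _ hj)]
  exact (Finset.sum_le_sum fun r _ => hcnt u r).trans (hbs.sum_le_tsum _ fun r _ => hb0 r)

/-! ### Counting pairs of sites of the box with a given lag -/

section Box

variable {q : ℕ}

lemma card_box_eq (n : Fin q → ℕ) : (#(_root_.box q n) : ℝ) = ∏ i, (n i : ℝ) := by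
  simp [_root_.box, Pi.card_Icc]

lemma card_boxJ_eq (n : Fin q → ℕ) (j : Fin q → ℤ) :
    #(boxJ q n j) = ∏ i, (n i - (j i).natAbs) := by
  have h : boxJ q n j = Finset.Icc (fun i => max 1 (1 - j i))
      (fun i => min (n i : ℤ) (n i - j i)) := by
    ext x
    simp only [boxJ, _root_.box, Finset.mem_filter, Finset.mem_Icc, Pi.le_def, Pi.add_apply,
      Pi.one_apply, ← forall_and]
    exact forall_congr' fun i => by omega
  rw [h, Pi.card_Icc]
  exact Finset.prod_congr rfl fun i _ => by rw [Int.card_Icc]; omega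

lemma tendsto_card_boxJ_div (j : Fin q → ℤ) :
    Tendsto (fun n : Fin q → ℕ => (∏ i, (n i : ℝ))⁻¹ * (#(boxJ q n j) : ℝ)) atTop (𝓝 1) := by
  have h1 : ∀ c : ℕ, Tendsto (fun m : ℕ => (m : ℝ)⁻¹ * ((m - c : ℕ) : ℝ)) atTop (𝓝 1) := by
    intro c
    have h : Tendsto (fun m : ℕ => 1 - (c : ℝ) * (m : ℝ)⁻¹) atTop (𝓝 (1 - c * 0)) :=
      tendsto_const_nhds.sub (tendsto_inv_atTop_nhds_zero_nat.const_mul _)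
    rw [mul_zero, sub_zero] at h
    refine h.congr' ?_
    filter_upwards [eventually_ge_atTop (c + 1)] with m hm
    have : (m : ℝ) ≠ 0 := Nat.cast_ne_zero.2 (by omega)
    rw [Nat.cast_sub (by omega)]
    field_simp
  have heval : ∀ i : Fin q, Tendsto (fun n : Fin q → ℕ => n i) atTop atTop := fun i =>
    tendsto_atTop_atTop.2 fun b => ⟨fun _ => b, fun a ha => ha i⟩
  have := tendsto_finsetProd Finset.univ fun i _ => (h1 (j i).natAbs).comp (heval i)
  simp only [Finset.prod_const_one] at this
  refine this.congr fun n => ?_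
  simp [card_boxJ_eq, Finset.prod_mul_distrib]

/-- Double sums of a function of `k - i` over the box, grouped by the lag `j = k - i`. -/
lemma hasSum_card_boxJ_mul (n : Fin q → ℕ) (f : (Fin q → ℤ) → ℝ) :
    HasSum (fun j => (#(boxJ q n j) : ℝ) * f j)
      (∑ i ∈ _root_.box q n, ∑ k ∈ _root_.box q n, f (k - i)) := by
  have h : ∀ i ∈ _root_.box q n, HasSum (fun j => if i + j ∈ _root_.box q n then f j else 0)
      (∑ k ∈ _root_.box q n, f (k - i)) := by
    intro i _
    have h1 : HasSum (fun k => if k ∈ _root_.box q n then f (k - i) else 0)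
        (∑ k ∈ _root_.box q n, if k ∈ _root_.box q n then f (k - i) else 0) :=
      hasSum_sum_of_ne_finset_zero fun k hk => if_neg hk
    rw [Finset.sum_congr rfl fun k hk => if_pos hk] at h1
    simpa [Function.comp_def] using (Equiv.addLeft i).hasSum_iff.2 h1
  refine (hasSum_sum h).congr_fun fun j => ?_
  rw [← Finset.sum_filter, Finset.sum_const, nsmul_eq_mul]
  rfl

end Box

/-! ### The normalized variance as a weighted sum of autocovariances -/

lemma hasSum_partialSumVar {q p : ℕ} [MeasurableSpace Ω] (P : Measure Ω)
    [IsProbabilityMeasure P] (ξ : (Fin q → ℤ) → Ω → (Fin p → ℝ))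
    (hmeas : ∀ i, Measurable (ξ i)) (hstat : StrictStationary ξ P)
    (hmom : ∀ k, Integrable (fun ω => (ξ 0 ω k) ^ 4) P) (n : Fin q → ℕ) :
    HasSum (fun j => ((∏ i, (n i : ℝ))⁻¹ * (#(boxJ q n j) : ℝ)) • acov ξ P j)
      (partialSumVar ξ P n) := by
  have hint : ∀ i k, Integrable (fun ω => (ξ i ω k) ^ 4) P := fun i k =>
    (hstat.identDistrib_pow_four hmeas i k).integrable_iff.2 (hmom k)
  have hm : ∀ i ν, Measurable fun ω => ξ i ω ν := fun i ν =>
    (measurable_pi_apply ν).comp (hmeas i)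
  have hmul : ∀ i k ν μ, Integrable (fun ω => ξ i ω ν * ξ k ω μ) P := fun i k ν μ =>
    integrable_mul_of_pow_four (hm i ν) (hm k μ) (hint i ν) (hint k μ)
  rw [Pi.hasSum]
  intro ν
  rw [Pi.hasSum]
  intro μ
  have e : partialSumVar ξ P n ν μ = (∏ i, (n i : ℝ))⁻¹ *
      ∑ i ∈ _root_.box q n, ∑ k ∈ _root_.box q n, acov ξ P (k - i) ν μ := by
    rw [partialSumVar]
    simp_rw [Finset.sum_mul_sum]
    rw [integral_finsetSum _ fun i _ => integrable_finsetSum _ fun k _ => hmul i k ν μ]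
    congr 1
    refine Finset.sum_congr rfl fun i _ => ?_
    rw [integral_finsetSum _ fun k _ => hmul i k ν μ]
    exact Finset.sum_congr rfl fun k _ => hstat.integral_mul hmeas i k ν μ
  rw [e]
  simpa [mul_assoc] using
    (hasSum_card_boxJ_mul n fun j => acov ξ P j ν μ).mul_left (∏ i, (n i : ℝ))⁻¹

/-- Lemma, part (b): convergence of the variance of the normalized
partial sums to the asymptotic variance, together with the asymptotic expansion. -/
theorem partialSumVar_tendsto
    {q p : ℕ} [Nonempty (Fin q)] (hp : 0 < p)
    [MeasurableSpace Ω] (P : Measure Ω) [IsProbabilityMeasure P]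
    (ξ : (Fin q → ℤ) → Ω → (Fin p → ℝ))
    (hmeas : ∀ i, Measurable (ξ i))
    (hstat : StrictStationary ξ P)
    (hmix : Tendsto (fun r : ℕ => phiMix ξ P (r : ℤ)) atTop (𝓝 0))
    (hmean : ∀ k, ∫ ω, ξ 0 ω k ∂P = 0)
    (hmom : ∀ k, Integrable (fun ω => (ξ 0 ω k) ^ 4) P)
    (hphisum : Summable (fun r : ℕ => (r : ℝ) ^ (q - 1) * Real.sqrt (phiMix ξ P (r : ℤ)))) :
    Tendsto (fun n : Fin q → ℕ => partialSumVar ξ P n) atTop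
      (𝓝 (∑' j : Fin q → ℤ, acov ξ P j)) ∧
    Tendsto (fun n : Fin q → ℕ =>
      partialSumVar ξ P n - (acov ξ P 0 +
        ∑ ℓ ∈ (Finset.Icc (fun i => -(n i : ℤ)) (fun i => (n i : ℤ))).erase 0, acov ξ P ℓ))
      atTop (𝓝 0) := by
  obtain ⟨C, hC⟩ := exists_norm_acov_le P ξ hmeas hstat hmean hmom
  have hsum : Summable fun j => ‖acov ξ P j‖ :=
    Summable.of_nonneg_of_le (fun _ => norm_nonneg _) hC
      ((summable_comp_supAbs (fun _ => Real.sqrt_nonneg _) hphisum).mul_left C)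
  have hmain : Tendsto (fun n : Fin q → ℕ => partialSumVar ξ P n) atTop
      (𝓝 (∑' j : Fin q → ℤ, acov ξ P j)) := by
    have h := tendsto_tsum_of_dominated_convergence (𝓕 := (atTop : Filter (Fin q → ℕ)))
      (f := fun n j => ((∏ i, (n i : ℝ))⁻¹ * (#(boxJ q n j) : ℝ)) • acov ξ P j)
      (g := acov ξ P) hsum
      (fun j => by simpa using (tendsto_card_boxJ_div j).smul_const (acov ξ P j))
      (Eventually.of_forall fun n j => by
        rw [norm_smul, Real.norm_of_nonneg (by positivity)]
        refine mul_le_of_le_one_left (norm_nonneg _) ?_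
        rw [← card_box_eq]
        refine inv_mul_le_one_of_le₀ ?_ (by positivity)
        exact_mod_cast Finset.card_filter_le _ _)
    exact h.congr fun n => (hasSum_partialSumVar P ξ hmeas hstat hmom n).tsum_eq
  refine ⟨hmain, ?_⟩
  have hbox : Tendsto (fun n : Fin q → ℕ =>
      (Finset.Icc (fun i => -(n i : ℤ)) (fun i => (n i : ℤ)) : Finset (Fin q → ℤ)))
      atTop atTop := by
    refine tendsto_atTop_finset_of_monotone (fun n m hnm => ?_) fun j =>
      ⟨fun i => (j i).natAbs, ?_⟩
    · exact Finset.Icc_subset_Icc (fun i => neg_le_neg (Nat.cast_le.2 (hnm i)))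
        (fun i => Nat.cast_le.2 (hnm i))
    · simp only [Finset.mem_Icc, Pi.le_def, ← forall_and]
      intro i; omega
  have hpart := hmain.sub (hsum.of_norm.hasSum.comp hbox)
  rw [sub_self] at hpart
  refine hpart.congr fun n => ?_
  rw [Finset.add_sum_erase _ (acov ξ P) (by simp [Pi.le_def])]
  rfl

end
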